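/- arXiv:1604.01887 — 2 statements merged into one kernel-verified Lean document; each statement's English description precedes it below -/
import Mathlib

section
/- For integers r, s ≥ 3, the pendant-tree 3-connectivity of the Cartesian product of complete graphs satisfies τ_3(K_r □ K_s) = r + s − 4. -/
open SimpleGraph

/-- A pendant `S`-Steiner tree in `G`: a subgraph `T` of `G` that is a tree,
contains `S`, and in which every vertex of `S` has degree 1. -/
def IsPendantSTree {V : Type*} (G : SimpleGraph V) (S : Set V) (T : G.Subgraph) : Prop :=
  S ⊆ T.verts ∧ T.coe.IsTree ∧ ∀ v ∈ S, (T.neighborSet v).ncard = 1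

/-- A family of pairwise internally disjoint pendant `S`-Steiner trees. -/
def IsIntDisjointFamily {V : Type*} (G : SimpleGraph V) (S : Set V)
    (F : Finset G.Subgraph) : Prop :=
  (∀ T ∈ F, IsPendantSTree G S T) ∧
  ∀ T ∈ F, ∀ T' ∈ F, T ≠ T' →
    T.edgeSet ∩ T'.edgeSet = ∅ ∧ T.verts ∩ T'.verts = S

/-- A family of pairwise edge-disjoint pendant `S`-Steiner trees. -/
def IsEdgeDisjointFamily {V : Type*} (G : SimpleGraph V) (S : Set V)
    (F : Finset G.Subgraph) : Prop :=
  (∀ T ∈ F, IsPendantSTree G S T) ∧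
  ∀ T ∈ F, ∀ T' ∈ F, T ≠ T' → T.edgeSet ∩ T'.edgeSet = ∅

/-- `τ(S)`: the maximum number of pairwise internally disjoint pendant `S`-Steiner trees. -/
noncomputable def tauLocal {V : Type*} (G : SimpleGraph V) (S : Set V) : ℕ :=
  sSup {n | ∃ F : Finset G.Subgraph, F.card = n ∧ IsIntDisjointFamily G S F}

/-- Pendant-tree `k`-connectivity `τ_k(G)`. -/
noncomputable def tau {V : Type*} (G : SimpleGraph V) (k : ℕ) : ℕ :=
  sInf {n | ∃ S : Finset V, S.card = k ∧ tauLocal G ↑S = n}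

/-- `μ(S)`: the maximum number of pairwise edge-disjoint pendant `S`-Steiner trees. -/
noncomputable def muLocal {V : Type*} (G : SimpleGraph V) (S : Set V) : ℕ :=
  sSup {n | ∃ F : Finset G.Subgraph, F.card = n ∧ IsEdgeDisjointFamily G S F}

/-- Pendant-tree `k`-edge-connectivity `μ_k(G)`. -/
noncomputable def mu {V : Type*} (G : SimpleGraph V) (k : ℕ) : ℕ :=
  sInf {n | ∃ S : Finset V, S.card = k ∧ muLocal G ↑S = n}

/-- Vertex connectivity (cut version): the least size of a vertex set whose removal
disconnects the graph or leaves at most one vertex. -/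
noncomputable def kappa {V : Type*} [Fintype V] (G : SimpleGraph V) : ℕ :=
  sInf {n | ∃ S : Finset V, S.card = n ∧
    (¬ ((⊤ : G.Subgraph).deleteVerts ↑S).coe.Connected ∨ Fintype.card V - S.card ≤ 1)}

/-- Edge connectivity: the least size of an edge set whose removal disconnects the graph. -/
noncomputable def edgeConn {V : Type*} (G : SimpleGraph V) : ℕ :=
  sInf {n | ∃ F : Finset (Sym2 V), F.card = n ∧ ↑F ⊆ G.edgeSet ∧
    ¬ (G.deleteEdges ↑F).Connected}

/-- Edges of `G` with one endpoint in `S` and the other outside `S`. -/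
def crossEdges {V : Type*} (G : SimpleGraph V) (S : Set V) : Set (Sym2 V) :=
  {e | e ∈ G.edgeSet ∧ ∃ u v, e = s(u, v) ∧ u ∈ S ∧ v ∉ S}


/-- A configuration of `n` disjoint tripods `(p i, q i, w i)` attached to `x, y, z`. -/
def Tripods {V : Type} (G : SimpleGraph V) (x y z : V) (n : ℕ) : Prop :=
  ∃ (ι : Type) (I : Finset ι) (p q w : ι → V), I.card = n ∧
    (∀ i ∈ I, G.Adj x (p i) ∧ G.Adj y (q i) ∧ G.Adj z (w i) ∧
      (p i = q i ∨ G.Adj (p i) (q i)) ∧ (p i = w i ∨ G.Adj (p i) (w i)) ∧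
      (q i = w i ∨ G.Adj (q i) (w i)) ∧
      p i ≠ x ∧ p i ≠ y ∧ p i ≠ z ∧ q i ≠ x ∧ q i ≠ y ∧ q i ≠ z ∧
      w i ≠ x ∧ w i ≠ y ∧ w i ≠ z) ∧
    (∀ i ∈ I, ∀ j ∈ I, i ≠ j → p i ≠ p j ∧ p i ≠ q j ∧ p i ≠ w j ∧
      q i ≠ p j ∧ q i ≠ q j ∧ q i ≠ w j ∧ w i ≠ p j ∧ w i ≠ q j ∧ w i ≠ w j)

theorem Tripods.swap12 {V : Type} {G : SimpleGraph V} {x y z : V} {n : ℕ}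
    (h : Tripods G x y z n) : Tripods G y x z n := by
  obtain ⟨ι, I, p, q, w, hc, h1, h2⟩ := h
  refine ⟨ι, I, q, p, w, hc, ?_, ?_⟩
  · intro i hi
    have := h1 i hi
    have e := G.adj_comm (p i) (q i)
    grind
  · intro i hi j hj hij
    have := h2 i hi j hj hij
    grind

theorem Tripods.swap23 {V : Type} {G : SimpleGraph V} {x y z : V} {n : ℕ}
    (h : Tripods G x y z n) : Tripods G x z y n := by
  obtain ⟨ι, I, p, q, w, hc, h1, h2⟩ := h
  refine ⟨ι, I, p, w, q, hc, ?_, ?_⟩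
  · intro i hi
    have := h1 i hi
    have e := G.adj_comm (q i) (w i)
    grind
  · intro i hi j hj hij
    have := h2 i hi j hj hij
    grind

/-- The rook graph. -/
abbrev Rook (α β : Type) : SimpleGraph (α × β) :=
  SimpleGraph.boxProd (⊤ : SimpleGraph α) (⊤ : SimpleGraph β)

theorem rook_adj {α β : Type} (u v : α × β) :
    (Rook α β).Adj u v ↔ (u.1 ≠ v.1 ∧ u.2 = v.2) ∨ (u.2 ≠ v.2 ∧ u.1 = v.1) := by
  simp [Rook, SimpleGraph.boxProd_adj]

theorem Tripods.transpose {α β : Type} {x y z : α × β} {n : ℕ}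
    (h : Tripods (Rook β α) x.swap y.swap z.swap n) : Tripods (Rook α β) x y z n := by
  obtain ⟨ι, I, p, q, w, hc, h1, h2⟩ := h
  have ha : ∀ u v : α × β, (Rook α β).Adj u v ↔ (Rook β α).Adj u.swap v.swap := by
    intro u v
    simp only [rook_adj, Prod.fst_swap, Prod.snd_swap]
    tauto
  have hs : ∀ (u : β × α) (v : α × β), u.swap = v ↔ u = v.swap := by
    rintro ⟨a, b⟩ ⟨c, d⟩
    simp [and_comm]
  refine ⟨ι, I, fun i => (p i).swap, fun i => (q i).swap, fun i => (w i).swap, hc, ?_, ?_⟩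
  · intro i hi
    simpa only [ha, Prod.swap_swap, ne_eq, hs] using h1 i hi
  · intro i hi j hj hij
    simpa only [ha, Prod.swap_swap, ne_eq, hs] using h2 i hi j hj hij

section Cases
variable {α β : Type} [Fintype α] [Fintype β] [DecidableEq α] [DecidableEq β]

/-- all three in one row -/
theorem tripods_A (a : α) (b₁ b₂ b₃ : β) (h12 : b₁ ≠ b₂) (h13 : b₁ ≠ b₃) (h23 : b₂ ≠ b₃) :
    Tripods (Rook α β) (a, b₁) (a, b₂) (a, b₃) (Fintype.card α + Fintype.card β - 4) := by
  refine ⟨α ⊕ β, ({a}ᶜ : Finset α).disjSum ({b₁, b₂, b₃}ᶜ : Finset β),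
    Sum.elim (fun d => (d, b₁)) (fun c => (a, c)),
    Sum.elim (fun d => (d, b₂)) (fun c => (a, c)),
    Sum.elim (fun d => (d, b₃)) (fun c => (a, c)), ?_, ?_, ?_⟩
  · have e1 : ({a} : Finset α).card = 1 := by simp
    have e2 : ({b₁, b₂, b₃} : Finset β).card = 3 := by
      rw [Finset.card_eq_three]; exact ⟨_, _, _, h12, h13, h23, rfl⟩
    have := Finset.card_le_univ ({a} : Finset α)
    have := Finset.card_le_univ ({b₁, b₂, b₃} : Finset β)
    rw [Finset.card_disjSum, Finset.card_compl, Finset.card_compl]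
    omega
  · rintro (d | c) hi <;> simp at hi <;> simp [rook_adj] <;> grind
  · rintro (d | c) hi (d' | c') hj hij <;> simp at hi hj hij <;> simp <;> grind

/-- corner -/
theorem tripods_B (a a' : α) (b b' : β) (ha : a ≠ a') (hb : b ≠ b') :
    Tripods (Rook α β) (a, b) (a, b') (a', b) (Fintype.card α + Fintype.card β - 4) := by
  refine ⟨α ⊕ β, ({a, a'}ᶜ : Finset α).disjSum ({b, b'}ᶜ : Finset β),
    Sum.elim (fun d => (d, b)) (fun c => (a, c)),
    Sum.elim (fun d => (d, b')) (fun c => (a, c)),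
    Sum.elim (fun d => (d, b)) (fun c => (a', c)), ?_, ?_, ?_⟩
  · have e1 := Finset.card_pair ha
    have e2 := Finset.card_pair hb
    have := Finset.card_le_univ ({a, a'} : Finset α)
    have := Finset.card_le_univ ({b, b'} : Finset β)
    rw [Finset.card_disjSum, Finset.card_compl, Finset.card_compl]
    omega
  · rintro (d | c) hi <;> simp at hi <;> simp [rook_adj] <;> grind
  · rintro (d | c) hi (d' | c') hj hij <;> simp at hi hj hij <;> simp <;> grind

/-- two in one row, columns distinct -/
theorem tripods_C (a a' : α) (b₁ b₂ b₃ : β) (ha : a ≠ a')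
    (h12 : b₁ ≠ b₂) (h13 : b₁ ≠ b₃) (h23 : b₂ ≠ b₃) :
    Tripods (Rook α β) (a, b₁) (a, b₂) (a', b₃) (Fintype.card α + Fintype.card β - 4) := by
  refine ⟨α ⊕ β, ({a, a'}ᶜ : Finset α).disjSum ({b₁, b₂}ᶜ : Finset β),
    Sum.elim (fun d => (d, b₁)) (fun c => (a, c)),
    Sum.elim (fun d => (d, b₂)) (fun c => (a, c)),
    Sum.elim (fun d => (d, b₃)) (fun c => (if c = b₃ then a else a', c)), ?_, ?_, ?_⟩
  · have e1 := Finset.card_pair ha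
    have e2 := Finset.card_pair h12
    have := Finset.card_le_univ ({a, a'} : Finset α)
    have := Finset.card_le_univ ({b₁, b₂} : Finset β)
    rw [Finset.card_disjSum, Finset.card_compl, Finset.card_compl]
    omega
  · rintro (d | c) hi <;> simp at hi <;> simp [rook_adj] <;> grind
  · rintro (d | c) hi (d' | c') hj hij <;> simp at hi hj hij <;> simp <;> grind

/-- general position -/
theorem tripods_D (a₁ a₂ a₃ : α) (b₁ b₂ b₃ : β)
    (g12 : a₁ ≠ a₂) (g13 : a₁ ≠ a₃) (g23 : a₂ ≠ a₃)
    (h12 : b₁ ≠ b₂) (h13 : b₁ ≠ b₃) (h23 : b₂ ≠ b₃) :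
    Tripods (Rook α β) (a₁, b₁) (a₂, b₂) (a₃, b₃) (Fintype.card α + Fintype.card β - 4) := by
  refine ⟨α ⊕ β, ({a₁, a₂}ᶜ : Finset α).disjSum ({b₁, b₂}ᶜ : Finset β),
    Sum.elim (fun d => if d = a₃ then (a₂, b₁) else (d, b₁))
      (fun c => if c = b₃ then (a₁, b₂) else (a₁, c)),
    Sum.elim (fun d => if d = a₃ then (a₂, b₁) else (d, b₂))
      (fun c => if c = b₃ then (a₁, b₂) else (a₂, c)),
    Sum.elim (fun d => if d = a₃ then (a₃, b₁) else (d, b₃))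
      (fun c => if c = b₃ then (a₁, b₃) else (a₃, c)), ?_, ?_, ?_⟩
  · have e1 := Finset.card_pair g12
    have e2 := Finset.card_pair h12
    have := Finset.card_le_univ ({a₁, a₂} : Finset α)
    have := Finset.card_le_univ ({b₁, b₂} : Finset β)
    rw [Finset.card_disjSum, Finset.card_compl, Finset.card_compl]
    omega
  · rintro (d | c) hi <;> simp at hi <;> simp [rook_adj] <;> split_ifs <;> grind
  · rintro (d | c) hi (d' | c') hj hij <;> simp at hi hj hij <;> simp <;> split_ifs <;> grind

/-- two in the first row -/
theorem tripods_row (a a' : α) (b₁ b₂ b₃ : β) (h12 : b₁ ≠ b₂) (ha : a ≠ a') :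
    Tripods (Rook α β) (a, b₁) (a, b₂) (a', b₃) (Fintype.card α + Fintype.card β - 4) := by
  by_cases h13 : b₁ = b₃
  · subst h13; exact tripods_B a a' b₁ b₂ ha h12
  by_cases h23 : b₂ = b₃
  · subst h23; exact (tripods_B a a' b₂ b₁ ha (Ne.symm h12)).swap12
  exact tripods_C a a' b₁ b₂ b₃ ha h12 h13 h23

/-- some two in a row -/
theorem tripods_row' (x y z : α × β) (hxy : x ≠ y) (hxz : x ≠ z) (hyz : y ≠ z)
    (h : x.1 = y.1) :
    Tripods (Rook α β) x y z (Fintype.card α + Fintype.card β - 4) := by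
  obtain ⟨a, b₁⟩ := x
  obtain ⟨a₂, b₂⟩ := y
  obtain ⟨a₃, b₃⟩ := z
  simp only at h
  subst h
  by_cases h3 : a = a₃
  · subst h3
    exact tripods_A a b₁ b₂ b₃ (by grind) (by grind) (by grind)
  · exact tripods_row a a₃ b₁ b₂ b₃ (by grind) h3

theorem tripods_row'' (x y z : α × β) (hxy : x ≠ y) (hxz : x ≠ z) (hyz : y ≠ z)
    (h : x.1 = y.1 ∨ x.1 = z.1 ∨ y.1 = z.1) :
    Tripods (Rook α β) x y z (Fintype.card α + Fintype.card β - 4) := by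
  rcases h with h | h | h
  · exact tripods_row' x y z hxy hxz hyz h
  · exact (tripods_row' x z y hxz hxy hyz.symm h).swap23
  · exact (tripods_row' y z x hyz hxy.symm hxz.symm h).swap23.swap12

theorem tripods_all (x y z : α × β) (hxy : x ≠ y) (hxz : x ≠ z) (hyz : y ≠ z) :
    Tripods (Rook α β) x y z (Fintype.card α + Fintype.card β - 4) := by
  by_cases h : x.1 = y.1 ∨ x.1 = z.1 ∨ y.1 = z.1
  · exact tripods_row'' x y z hxy hxz hyz h
  by_cases h' : x.2 = y.2 ∨ x.2 = z.2 ∨ y.2 = z.2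
  · apply Tripods.transpose
    rw [add_comm]
    exact tripods_row'' x.swap y.swap z.swap (by simpa using hxy) (by simpa using hxz)
      (by simpa using hyz) h'
  · push Not at h h'
    exact tripods_D x.1 y.1 z.1 x.2 y.2 z.2 h.1 h.2.1 h.2.2 h'.1 h'.2.1 h'.2.2

end Cases

/-- A clique `W` with an attachment map `f` gives a pendant tree on `S ∪ W`. -/
theorem exists_pendant {V : Type} [Finite V] (G : SimpleGraph V) (S W : Set V) (f : V → V)
    (w₀ : V) (hw₀ : w₀ ∈ W) (hd : ∀ v ∈ S, v ∉ W)
    (hW : ∀ u ∈ W, ∀ v ∈ W, u ≠ v → G.Adj u v)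
    (hf : ∀ v ∈ S, f v ∈ W ∧ G.Adj v (f v)) :
    ∃ T : G.Subgraph, T.verts = S ∪ W ∧ IsPendantSTree G S T ∧
      ∀ u v, T.Adj u v → u ∈ W ∨ v ∈ W := by
  classical
  let H : G.Subgraph :=
    { verts := S ∪ W
      Adj := fun u v => G.Adj u v ∧ ((u ∈ W ∧ v ∈ W) ∨ (u ∈ S ∧ v = f u) ∨ (v ∈ S ∧ u = f v))
      adj_sub := fun h => h.1
      edge_vert := by
        rintro u v ⟨h, h' | h' | h'⟩
        · exact Or.inr h'.1
        · exact Or.inl h'.1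
        · right; rw [h'.2]; exact (hf _ h'.1).1
      symm := ⟨by
        rintro u v ⟨h, h'⟩
        refine ⟨h.symm, ?_⟩
        tauto⟩ }
  have hreachW : ∀ u (hu : u ∈ W), H.coe.Reachable ⟨u, Or.inr hu⟩ ⟨w₀, Or.inr hw₀⟩ := by
    intro u hu
    by_cases h : u = w₀
    · subst h; exact Reachable.refl _
    · apply Adj.reachable
      exact ⟨hW u hu w₀ hw₀ h, Or.inl ⟨hu, hw₀⟩⟩
  have hreach : ∀ u : H.verts, H.coe.Reachable u ⟨w₀, Or.inr hw₀⟩ := by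
    rintro ⟨u, hu | hu⟩
    · have h1 := hf u hu
      refine Reachable.trans (Adj.reachable (v := ⟨f u, Or.inr h1.1⟩) ?_) (hreachW _ h1.1)
      exact ⟨h1.2, Or.inr (Or.inl ⟨hu, rfl⟩)⟩
    · exact hreachW u hu
  have hconn : H.coe.Connected := by
    have : Nonempty H.verts := ⟨⟨w₀, Or.inr hw₀⟩⟩
    exact ⟨fun u v => (hreach u).trans (hreach v).symm⟩
  obtain ⟨K, hK, hKt⟩ := hconn.exists_isTree_le
  let T : G.Subgraph :=
    { verts := S ∪ W
      Adj := fun u v => ∃ (hu : u ∈ S ∪ W) (hv : v ∈ S ∪ W), K.Adj ⟨u, hu⟩ ⟨v, hv⟩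
      adj_sub := fun ⟨hu, hv, h⟩ => (hK h).1
      edge_vert := fun ⟨hu, hv, h⟩ => hu
      symm := ⟨fun u v ⟨hu, hv, h⟩ => ⟨hv, hu, h.symm⟩⟩ }
  have hTK : T.coe = K := by
    ext ⟨u, hu⟩ ⟨v, hv⟩
    constructor
    · rintro ⟨_, _, h⟩; exact h
    · intro h; exact ⟨hu, hv, h⟩
  refine ⟨T, rfl, ⟨Set.subset_union_left, ?_, ?_⟩, ?_⟩
  · rw [hTK]; exact hKt
  · intro v hv
    rw [Set.ncard_eq_one]
    refine ⟨f v, ?_⟩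
    have hsub : ∀ u, T.Adj v u → u = f v := by
      rintro u ⟨h1, h2, h⟩
      have h3 := (hK h).2
      rcases h3 with h3 | h3 | h3
      · exact absurd h3.1 (hd v hv)
      · exact h3.2
      · exfalso
        have h4 : v = f u := h3.2
        exact hd v hv (h4 ▸ (hf u h3.1).1)
    have hne : ∃ u, T.Adj v u := by
      have hpre := hKt.connected.preconnected ⟨v, Or.inl hv⟩ ⟨w₀, Or.inr hw₀⟩
      obtain ⟨p⟩ := hpre
      cases p with
      | nil => exact absurd hw₀ (hd _ hv)
      | cons h p => exact ⟨_, Or.inl hv, Subtype.property _, h⟩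
    ext u
    simp only [Subgraph.mem_neighborSet, Set.mem_singleton_iff]
    constructor
    · exact hsub u
    · rintro rfl
      obtain ⟨u, hu⟩ := hne
      rwa [← hsub u hu]
  · rintro u v ⟨h1, h2, h⟩
    rcases (hK h).2 with h3 | h3 | h3
    · exact Or.inl h3.1
    · right
      have h4 : v = f u := h3.2
      rw [h4]; exact (hf u h3.1).1
    · left
      have h4 : u = f v := h3.2
      rw [h4]; exact (hf v h3.1).1

theorem family_bdd {V : Type} [Finite V] (G : SimpleGraph V) (S : Set V) :
    BddAbove {n | ∃ F : Finset G.Subgraph, F.card = n ∧ IsIntDisjointFamily G S F} := by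
  classical
  have := Fintype.ofFinite G.Subgraph
  refine ⟨Fintype.card G.Subgraph, ?_⟩
  rintro n ⟨F, rfl, -⟩
  exact Finset.card_le_univ F

theorem le_tauLocal {V : Type} [Finite V] [DecidableEq V] (G : SimpleGraph V) (x y z : V)
    (hxy : x ≠ y) (hxz : x ≠ z) (hyz : y ≠ z) (n : ℕ) (h : Tripods G x y z n) :
    n ≤ tauLocal G (↑({x, y, z} : Finset V)) := by
  classical
  obtain ⟨ι, I, p, q, w, hc, h1, h2⟩ := h
  have key : ∀ i : I, ∃ T : G.Subgraph,
      T.verts = (↑({x, y, z} : Finset V) : Set V) ∪ {p i, q i, w i} ∧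
      IsPendantSTree G (↑({x, y, z} : Finset V)) T ∧
      ∀ u v, T.Adj u v → u ∈ ({p i, q i, w i} : Set V) ∨ v ∈ ({p i, q i, w i} : Set V) := by
    rintro ⟨i, hi⟩
    have H := h1 i hi
    have e1 := G.adj_comm (p i) (q i)
    have e2 := G.adj_comm (p i) (w i)
    have e3 := G.adj_comm (q i) (w i)
    apply exists_pendant G _ _ (fun v => if v = x then p i else if v = y then q i else w i) (p i)
    · simp
    · clear h1 h2
      intro v hv
      simp only [Finset.coe_insert, Finset.coe_singleton, Set.mem_insert_iff,
        Set.mem_singleton_iff] at hv ⊢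
      grind
    · clear h1 h2
      intro u hu v hv huv
      simp only [Set.mem_insert_iff, Set.mem_singleton_iff] at hu hv
      grind
    · clear h1 h2
      intro v hv
      simp only [Finset.coe_insert, Finset.coe_singleton, Set.mem_insert_iff,
        Set.mem_singleton_iff] at hv ⊢
      grind
  choose T hT1 hT2 hT3 using key
  have hinter : ∀ i j : I, i ≠ j → (T i).verts ∩ (T j).verts = ↑({x, y, z} : Finset V) := by
    intro i j hij
    have H := h2 i i.2 j j.2 (fun h => hij (Subtype.ext h))
    rw [hT1, hT1]
    ext v
    simp only [Finset.coe_insert, Finset.coe_singleton, Set.mem_insert_iff, Set.mem_union,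
        Set.mem_inter_iff, Set.mem_singleton_iff]
    clear h1 h2 hT1 hT2 hT3
    grind
  have hpS : ∀ i : I, p i ∉ (↑({x, y, z} : Finset V) : Set V) := by
    intro i
    have := h1 i i.2
    simp; grind
  have hinj : Function.Injective T := by
    intro i j hij
    by_contra hne
    have h3 := hinter i j hne
    rw [← hij, Set.inter_self] at h3
    apply hpS i
    rw [← h3, hT1]
    simp
  apply le_csSup (family_bdd G _)
  refine ⟨Finset.univ.image T, ?_, ?_, ?_⟩
  · rw [Finset.card_image_of_injective _ hinj]; simpa using hc
  · intro t ht
    obtain ⟨i, -, rfl⟩ := Finset.mem_image.1 ht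
    exact hT2 i
  · intro t ht t' ht' hne
    obtain ⟨i, -, rfl⟩ := Finset.mem_image.1 ht
    obtain ⟨j, -, rfl⟩ := Finset.mem_image.1 ht'
    have hij : i ≠ j := fun h => hne (by rw [h])
    refine ⟨?_, hinter i j hij⟩
    ext e
    induction e using Sym2.ind with
    | _ u v =>
      simp only [Set.mem_inter_iff, Subgraph.mem_edgeSet, Set.mem_empty_iff_false, iff_false,
        not_and]
      intro hi hj
      have hu : u ∈ (↑({x, y, z} : Finset V) : Set V) := by
        rw [← hinter i j hij]; exact ⟨hi.fst_mem, hj.fst_mem⟩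
      have hv : v ∈ (↑({x, y, z} : Finset V) : Set V) := by
        rw [← hinter i j hij]; exact ⟨hi.snd_mem, hj.snd_mem⟩
      have H := h1 i i.2
      have H3 := hT3 i u v hi
      simp only [Finset.coe_insert, Finset.coe_singleton, Set.mem_insert_iff,
        Set.mem_singleton_iff] at hu hv H3
      clear h1 h2 hT1 hT2 hT3 hinter hpS hinj hi hj hij hne ht ht'
      rcases H3 with H3 | H3
      · clear hv
        grind
      · clear hu
        grind

/-- No edge of a pendant tree joins two vertices of `S` when `S` has a third vertex. -/
theorem pendant_no_edge {V : Type} (G : SimpleGraph V) (S : Set V) (T : G.Subgraph)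
    (hT : IsPendantSTree G S T) (x y z : V) (hx : x ∈ S) (hy : y ∈ S) (hz : z ∈ S)
    (hxz : x ≠ z) (hyz : y ≠ z) : ¬ T.Adj x y := by
  intro hadj
  obtain ⟨hS, htree, hdeg⟩ := hT
  have hnx : ∀ u, T.Adj x u → u = y := by
    intro u hu
    obtain ⟨a, ha⟩ := Set.ncard_eq_one.1 (hdeg x hx)
    have h1 : u ∈ T.neighborSet x := hu
    have h2 : y ∈ T.neighborSet x := hadj
    rw [ha] at h1 h2
    exact h1.trans h2.symm
  have hny : ∀ u, T.Adj y u → u = x := by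
    intro u hu
    obtain ⟨a, ha⟩ := Set.ncard_eq_one.1 (hdeg y hy)
    have h1 : u ∈ T.neighborSet y := hu
    have h2 : x ∈ T.neighborSet y := hadj.symm
    rw [ha] at h1 h2
    exact h1.trans h2.symm
  have hwalk : ∀ (u v : T.verts), T.coe.Walk u v → (u.1 = x ∨ u.1 = y) → (v.1 = x ∨ v.1 = y) := by
    intro u v p
    induction p with
    | nil => exact id
    | cons h p ih =>
      intro hu
      apply ih
      rw [Subgraph.coe_adj] at h
      have h' := h
      rcases hu with hu | hu
      · rw [hu] at h'; exact Or.inr (hnx _ h')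
      · rw [hu] at h'; exact Or.inl (hny _ h')
  obtain ⟨p⟩ := htree.connected.preconnected ⟨x, hS hx⟩ ⟨z, hS hz⟩
  rcases hwalk _ _ p (Or.inl rfl) with h | h
  · exact hxz h.symm
  · exact hyz h.symm

theorem tauLocal_le {α β : Type} [Fintype α] [Fintype β] [DecidableEq α] [DecidableEq β]
    (a a' : α) (b b' : β) (ha : a ≠ a') (hb : b ≠ b') :
    tauLocal (Rook α β) (↑({(a, b), (a, b'), (a', b)} : Finset (α × β))) ≤
      Fintype.card α + Fintype.card β - 4 := by
  classical
  unfold tauLocal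
  apply csSup_le
  · exact ⟨0, ∅, rfl, by simp, by simp⟩
  rintro n ⟨F, rfl, hF1, hF2⟩
  have hex : ∀ T : (Rook α β).Subgraph, ∃ u, T ∈ F → T.Adj (a, b) u := by
    intro T
    by_cases hT : T ∈ F
    · obtain ⟨u, hu⟩ := Set.ncard_eq_one.1 ((hF1 T hT).2.2 (a, b) (by simp))
      refine ⟨u, fun _ => ?_⟩
      have : u ∈ T.neighborSet (a, b) := by rw [hu]; rfl
      exact this
    · exact ⟨(a, b), fun h => absurd h hT⟩
  choose g hg using hex
  have hinj : Set.InjOn g (↑F : Set (Rook α β).Subgraph) := by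
    intro T hT T' hT' he
    by_contra hne
    have h1 := (hF2 T hT T' hT' hne).1
    have h2 : s((a, b), g T) ∈ T.edgeSet ∩ T'.edgeSet :=
      ⟨hg T hT, by rw [he]; exact hg T' hT'⟩
    rw [h1] at h2
    exact h2
  let B : Finset (α × β) := (({a, a'}ᶜ : Finset α).disjSum ({b, b'}ᶜ : Finset β)).image
    (Sum.elim (fun d => (d, b)) (fun c => (a, c)))
  have hmaps : ∀ T ∈ F, g T ∈ B := by
    intro T hT
    have hadj := hg T hT
    have hG := (rook_adj _ _).1 hadj.adj_sub
    have n1 : g T ≠ (a, b') := by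
      intro h
      rw [h] at hadj
      exact pendant_no_edge _ _ T (hF1 T hT) (a, b) (a, b') (a', b) (by simp) (by simp) (by simp)
        (by simp [ha]) (by simp [ha]) hadj
    have n2 : g T ≠ (a', b) := by
      intro h
      rw [h] at hadj
      exact pendant_no_edge _ _ T (hF1 T hT) (a, b) (a', b) (a, b') (by simp) (by simp) (by simp)
        (by simp [hb]) (by simp [ha.symm]) hadj
    simp only [B, Finset.mem_image]
    rcases hgT : g T with ⟨u, v⟩
    rw [hgT] at hG n1 n2
    simp only at hG
    rcases hG with ⟨h1, h2⟩ | ⟨h1, h2⟩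
    · subst h2
      refine ⟨Sum.inl u, ?_, rfl⟩
      simp; grind
    · subst h2
      refine ⟨Sum.inr v, ?_, rfl⟩
      simp; grind
  calc F.card ≤ B.card := Finset.card_le_card_of_injOn g hmaps hinj
    _ ≤ _ := Finset.card_image_le
    _ = _ := by
      have e1 := Finset.card_pair ha
      have e2 := Finset.card_pair hb
      have := Finset.card_le_univ ({a, a'} : Finset α)
      have := Finset.card_le_univ ({b, b'} : Finset β)
      rw [Finset.card_disjSum, Finset.card_compl, Finset.card_compl]
      omega

/-- τ_3(K_r □ K_s) = r + s - 4 for r, s ≥ 3. -/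
theorem tau_three_boxProd (r s : ℕ) (hr : 3 ≤ r) (hs : 3 ≤ s) :
    tau (SimpleGraph.boxProd (⊤ : SimpleGraph (Fin r)) (⊤ : SimpleGraph (Fin s))) 3
      = r + s - 4 := by
  have hlow : ∀ S : Finset (Fin r × Fin s), S.card = 3 →
      r + s - 4 ≤ tauLocal (Rook (Fin r) (Fin s)) ↑S := by
    intro S hS
    obtain ⟨x, y, z, hxy, hxz, hyz, rfl⟩ := Finset.card_eq_three.1 hS
    apply le_tauLocal _ x y z hxy hxz hyz
    simpa using tripods_all x y z hxy hxz hyz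
  let a : Fin r := ⟨0, by omega⟩
  let a' : Fin r := ⟨1, by omega⟩
  let b : Fin s := ⟨0, by omega⟩
  let b' : Fin s := ⟨1, by omega⟩
  have ha : a ≠ a' := by simp [a, a']
  have hb : b ≠ b' := by simp [b, b']
  have hup := tauLocal_le a a' b b' ha hb
  simp only [Fintype.card_fin] at hup
  have hcard : ({(a, b), (a, b'), (a', b)} : Finset (Fin r × Fin s)).card = 3 := by
    rw [Finset.card_eq_three]
    exact ⟨_, _, _, by simp [hb], by simp [ha], by simp [ha], rfl⟩
  apply le_antisymm
  · refine le_trans ?_ hup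
    unfold tau
    exact Nat.sInf_le ⟨_, hcard, rfl⟩
  · unfold tau
    refine le_csInf ⟨_, _, hcard, rfl⟩ ?_
    rintro n ⟨S, hS, rfl⟩
    exact hlow S hS
end

section
/- For any two integers p, q with q ≥ 2p, there exists a graph G such that τ_3(G) = p and τ_3(L(G)) = q; in particular G = K_{p+2, q−p+2} works, since τ_3(K_{p+2,q−p+2}) = p and τ_3(L(K_{p+2,q−p+2})) = τ_3(K_{p+2} □ K_{q−p+2}) = q. -/
open SimpleGraph

/-- A hub system for one pendant tree on `s 0, s 1, s 2`. -/
structure HubSys {V : Type*} (G : SimpleGraph V) (s k : Fin 3 → V) : Prop where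
  adj : ∀ t, G.Adj (s t) (k t)
  notin : ∀ t u, k t ≠ s u
  near : ∀ t u, k t = k u ∨ G.Adj (k t) (k u)

theorem HubSys.exists_tree {V : Type*} {G : SimpleGraph V} {s k : Fin 3 → V}
    (hs : Function.Injective s) (h : HubSys G s k) :
    ∃ T : G.Subgraph, IsPendantSTree G (Set.range s) T ∧
      T.verts = Set.range s ∪ Set.range k ∧
      (∀ t, T.Adj (s t) (k t)) ∧ ∀ t w, T.Adj (s t) w → w = k t := by
  let H : G.Subgraph :=
    { verts := Set.range s ∪ Set.range k
      Adj := fun u v => (∃ t, u = s t ∧ v = k t) ∨ (∃ t, v = s t ∧ u = k t) ∨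
        (u ∈ Set.range k ∧ v ∈ Set.range k ∧ G.Adj u v)
      adj_sub := by
        rintro u v (⟨t, rfl, rfl⟩ | ⟨t, rfl, rfl⟩ | ⟨_, _, hh⟩)
        · exact h.adj t
        · exact (h.adj t).symm
        · exact hh
      edge_vert := by
        rintro u v (⟨t, rfl, rfl⟩ | ⟨t, rfl, rfl⟩ | ⟨hh, _, _⟩)
        · exact Or.inl ⟨t, rfl⟩
        · exact Or.inr ⟨t, rfl⟩
        · exact Or.inr hh
      symm := ⟨by
        rintro u v (⟨t, rfl, rfl⟩ | ⟨t, rfl, rfl⟩ | ⟨h1, h2, h3⟩)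
        · exact Or.inr (Or.inl ⟨t, rfl, rfl⟩)
        · exact Or.inl ⟨t, rfl, rfl⟩
        · exact Or.inr (Or.inr ⟨h2, h1, h3.symm⟩)⟩ }
  have hsV : ∀ t, s t ∈ H.verts := fun t => Or.inl ⟨t, rfl⟩
  have hkV : ∀ t, k t ∈ H.verts := fun t => Or.inr ⟨t, rfl⟩
  have reachk : ∀ t, H.coe.Reachable ⟨k 0, hkV 0⟩ ⟨k t, hkV t⟩ := by
    intro t
    rcases h.near 0 t with e | e
    · have : (⟨k 0, hkV 0⟩ : H.verts) = ⟨k t, hkV t⟩ := Subtype.ext e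
      rw [this]
    · apply SimpleGraph.Adj.reachable
      exact Or.inr (Or.inr ⟨⟨0, rfl⟩, ⟨t, rfl⟩, e⟩)
  have reach : ∀ x : H.verts, H.coe.Reachable ⟨k 0, hkV 0⟩ x := by
    rintro ⟨x, ⟨t, rfl⟩ | ⟨t, rfl⟩⟩
    · refine (reachk t).trans (SimpleGraph.Adj.reachable ?_)
      exact Or.inr (Or.inl ⟨t, rfl, rfl⟩)
    · exact reachk t
  have hconn : H.coe.Connected :=
    { preconnected := fun x y => (reach x).symm.trans (reach y)
      nonempty := ⟨⟨k 0, hkV 0⟩⟩ }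
  obtain ⟨T0, hle, hT0⟩ := hconn.exists_isTree_le
  let T : G.Subgraph :=
    { verts := H.verts
      Adj := fun u v => ∃ (hu : u ∈ H.verts) (hv : v ∈ H.verts), T0.Adj ⟨u, hu⟩ ⟨v, hv⟩
      adj_sub := by
        rintro u v ⟨hu, hv, hh⟩
        exact H.adj_sub (hle hh)
      edge_vert := by
        rintro u v ⟨hu, hv, hh⟩
        exact hu
      symm := ⟨by
        rintro u v ⟨hu, hv, hh⟩
        exact ⟨hv, hu, hh.symm⟩⟩ }
  have hTc : T.coe = T0 := by
    ext ⟨u, hu⟩ ⟨v, hv⟩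
    exact ⟨fun ⟨_, _, hh⟩ => hh, fun hh => ⟨hu, hv, hh⟩⟩
  have uniq : ∀ t w, T.Adj (s t) w → w = k t := by
    rintro t w ⟨hu, hv, hh⟩
    have := hle hh
    rcases this with ⟨u, h1, h2⟩ | ⟨u, h1, h2⟩ | ⟨⟨u, h1⟩, _⟩
    · have : t = u := hs h1
      subst this; exact h2
    · exact absurd h2.symm (h.notin _ _)
    · exact absurd h1 (h.notin _ _)
  have hnt : Nontrivial H.verts :=
    ⟨⟨k 0, hkV 0⟩, ⟨s 0, hsV 0⟩, fun e => h.notin 0 0 (Subtype.ext_iff.1 e)⟩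
  have ex : ∀ t, T.Adj (s t) (k t) := by
    intro t
    obtain ⟨w, hw⟩ := hT0.connected.preconnected.exists_adj_of_nontrivial ⟨s t, hsV t⟩
    have h1 : T.Adj (s t) w := ⟨hsV t, w.2, hw⟩
    have := uniq t _ h1
    rwa [this] at h1
  refine ⟨T, ⟨?_, ?_, ?_⟩, rfl, ex, uniq⟩
  · rintro _ ⟨t, rfl⟩; exact hsV t
  · rw [hTc]; exact hT0
  · rintro _ ⟨t, rfl⟩
    have : T.neighborSet (s t) = {k t} := by
      ext w
      exact ⟨fun hw => uniq t w hw, fun hw => by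
        rw [Set.mem_singleton_iff] at hw; subst hw; exact ex t⟩
    rw [this, Set.ncard_singleton]

theorem le_tauLocal_s19 {V : Type*} [Finite V] {G : SimpleGraph V} {s : Fin 3 → V}
    (hs : Function.Injective s) {ι : Type*} [Fintype ι] (k : ι → Fin 3 → V)
    (hk : ∀ i, HubSys G s (k i)) (hd : ∀ i j, i ≠ j → ∀ t u, k i t ≠ k j u) :
    Fintype.card ι ≤ tauLocal G (Set.range s) := by
  classical
  choose T hT hV hA hU using fun i => (hk i).exists_tree hs
  have hinj : Function.Injective T := by
    intro i j hij
    by_contra hne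
    have h1 := hA i 0
    rw [hij] at h1
    exact hd i j hne 0 0 (hU j 0 _ h1)
  have hfin : Finite G.Subgraph := inferInstance
  have := Fintype.ofFinite G.Subgraph
  apply le_csSup
  · refine ⟨Fintype.card G.Subgraph, ?_⟩
    rintro n ⟨F, rfl, _⟩
    exact Finset.card_le_univ F
  · refine ⟨Finset.univ.image T, ?_, ?_, ?_⟩
    · rw [Finset.card_image_of_injective _ hinj, Finset.card_univ]
    · intro X hX
      obtain ⟨i, _, rfl⟩ := Finset.mem_image.1 hX
      exact hT i
    · intro X hX Y hY hne
      obtain ⟨i, _, rfl⟩ := Finset.mem_image.1 hX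
      obtain ⟨j, _, rfl⟩ := Finset.mem_image.1 hY
      have hij : i ≠ j := fun e => hne (by rw [e])
      have hVV : (T i).verts ∩ (T j).verts = Set.range s := by
        rw [hV, hV]
        ext x
        constructor
        · rintro ⟨h1 | ⟨t, rfl⟩, h2 | ⟨u, hu⟩⟩
          · exact h1
          · exact h1
          · exact h2
          · exact absurd hu.symm (hd i j hij t u)
        · intro hx; exact ⟨Or.inl hx, Or.inl hx⟩
      refine ⟨?_, hVV⟩
      rw [Set.eq_empty_iff_forall_notMem]
      intro e
      induction e using Sym2.ind with
      | _ x y =>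
        rintro ⟨h1, h2⟩
        rw [Subgraph.mem_edgeSet] at h1 h2
        have hx : x ∈ Set.range s := by
          rw [← hVV]; exact ⟨h1.fst_mem, h2.fst_mem⟩
        obtain ⟨t, rfl⟩ := hx
        exact hd i j hij t t ((hU i t _ h1).symm.trans (hU j t _ h2))

theorem tauLocal_le_s19 {V : Type*} {G : SimpleGraph V} {S : Finset V} (hS : S.card = 3)
    {v : V} (hv : v ∈ S) (N : Finset V) (hN : ∀ w, G.Adj v w → w ∉ S → w ∈ N) :
    tauLocal G (S : Set V) ≤ N.card := by
  classical
  have hvS : v ∈ (S : Set V) := hv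
  apply csSup_le
  · exact ⟨0, ∅, rfl, by simp [IsIntDisjointFamily]⟩
  rintro n ⟨F, rfl, hF, hD⟩
  have key : ∀ T ∈ F, ∃ w, T.Adj v w ∧ w ∉ S := by
    intro T hT
    obtain ⟨hsub, htree, hdeg⟩ := hF T hT
    obtain ⟨w, hw⟩ := Set.ncard_eq_one.1 (hdeg v hvS)
    have hvw : T.Adj v w := by
      have : w ∈ T.neighborSet v := by rw [hw]; rfl
      exact this
    refine ⟨w, hvw, fun hwS => ?_⟩
    obtain ⟨v', hw'⟩ := Set.ncard_eq_one.1 (hdeg w hwS)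
    have hvv : v = v' := by
      have : v ∈ T.neighborSet w := hvw.symm
      rwa [hw'] at this
    subst hvv
    have clos : ∀ x y, T.Adj x y → x ∈ ({v, w} : Set V) → y ∈ ({v, w} : Set V) := by
      rintro x y hxy (rfl | rfl)
      · have : y ∈ T.neighborSet x := hxy
        rw [hw] at this
        exact Or.inr this
      · have : y ∈ T.neighborSet x := hxy
        rw [hw'] at this
        exact Or.inl this
    have walk : ∀ (x y : T.verts), T.coe.Walk x y →
        (x : V) ∈ ({v, w} : Set V) → (y : V) ∈ ({v, w} : Set V) := by
      intro x y p
      induction p with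
      | nil => exact id
      | cons hadj _ ih => exact fun hx => ih (clos _ _ hadj hx)
    have hSsub : S ⊆ {v, w} := by
      intro x hx
      obtain ⟨p⟩ := htree.connected.preconnected ⟨v, hsub hvS⟩ ⟨x, hsub hx⟩
      have := walk _ _ p (Or.inl rfl)
      simpa using this
    have := Finset.card_le_card hSsub
    have := Finset.card_le_two (a := v) (b := w)
    omega
  have : Nonempty V := ⟨v⟩
  choose! f hf hfS using key
  apply Finset.card_le_card_of_injOn f
  · intro T hT
    exact hN _ (hf T hT).adj_sub (hfS T hT)
  · intro T hT T' hT' he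
    by_contra hne
    have h1 : f T ∈ T.verts ∩ T'.verts :=
      ⟨(hf T hT).snd_mem, by rw [he]; exact (hf T' hT').snd_mem⟩
    rw [(hD T hT T' hT' hne).2] at h1
    exact hfS T hT h1

theorem tau_eq {V : Type*} [Finite V] {G : SimpleGraph V} {n : ℕ}
    (hlow : ∀ s : Fin 3 → V, Function.Injective s → ∃ (ι : Type) (_ : Fintype ι)
      (k : ι → Fin 3 → V), n ≤ Fintype.card ι ∧ (∀ i, HubSys G s (k i)) ∧
        ∀ i j, i ≠ j → ∀ t u, k i t ≠ k j u)
    (S : Finset V) (hS : S.card = 3) (v : V) (hv : v ∈ S) (N : Finset V) (hNn : N.card ≤ n)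
    (hN : ∀ w, G.Adj v w → w ∉ S → w ∈ N) : tau G 3 = n := by
  apply le_antisymm
  · have h0 : tau G 3 ≤ tauLocal G (S : Set V) := Nat.sInf_le ⟨S, hS, rfl⟩
    exact h0.trans ((tauLocal_le_s19 hS hv N hN).trans hNn)
  · apply le_csInf
    · exact ⟨_, S, hS, rfl⟩
    · rintro m ⟨S', hS', rfl⟩
      let e := S'.equivFin.symm
      rw [hS'] at e
      have hs : Function.Injective (fun t => (e t : V)) :=
        Subtype.val_injective.comp e.injective
      have hr : Set.range (fun t => (e t : V)) = S' := by
        ext x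
        constructor
        · rintro ⟨t, rfl⟩; exact (e t).2
        · intro hx; exact ⟨e.symm ⟨x, hx⟩, by simp⟩
      obtain ⟨ι, _, k, h1, h2, h3⟩ := hlow _ hs
      rw [← hr]
      exact h1.trans (le_tauLocal_s19 hs k h2 h3)

theorem exists_inj_fin {α : Type*} {s : Finset α} {n : ℕ} (h : n ≤ s.card) :
    ∃ X : Fin n → α, Function.Injective X ∧ ∀ i, X i ∈ s :=
  ⟨fun i => (s.equivFin.symm (Fin.castLE h i) : α),
    Subtype.val_injective.comp (s.equivFin.symm.injective.comp (Fin.castLE_injective h)),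
    fun _ => Subtype.prop _⟩

theorem bip_low (p b : ℕ) (hb : p + 2 ≤ b) (s : Fin 3 → Fin (p + 2) ⊕ Fin b)
    (hs : Function.Injective s) : ∃ (ι : Type) (_ : Fintype ι)
      (k : ι → Fin 3 → Fin (p + 2) ⊕ Fin b), p ≤ Fintype.card ι ∧
        (∀ i, HubSys (completeBipartiteGraph (Fin (p + 2)) (Fin b)) s (k i)) ∧
        ∀ i j, i ≠ j → ∀ t u, k i t ≠ k j u := by
  classical
  by_cases hL : ∀ t, (s t).isLeft
  · refine ⟨Fin b, inferInstance, fun i _ => Sum.inr i, by simp; omega, ?_, ?_⟩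
    · intro i
      refine ⟨fun t => ?_, fun t u hh => ?_, fun t u => Or.inl rfl⟩
      · have := hL t
        simp [this]
      · have := hL u
        simp [← hh] at this
    · intro i j hij t u; simpa using hij
  by_cases hR : ∀ t, (s t).isRight
  · refine ⟨Fin (p + 2), inferInstance, fun i _ => Sum.inl i, by simp, ?_, ?_⟩
    · intro i
      refine ⟨fun t => ?_, fun t u hh => ?_, fun t u => Or.inl rfl⟩
      · have := hR t
        simp [this]
      · have := hR u
        simp [← hh] at this
    · intro i j hij t u; simpa using hij
  push Not at hL hR
  obtain ⟨tl, htl⟩ := hL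
  obtain ⟨tr, htr⟩ := hR
  let SS : Finset (Fin (p + 2) ⊕ Fin b) := Finset.univ.image s
  have hSS : SS.card = 3 := by
    simp [SS, Finset.card_image_of_injective _ hs]
  have hsum : SS.toLeft.card + SS.toRight.card = 3 := by
    rw [Finset.card_toLeft_add_card_toRight, hSS]
  have hl : 0 < SS.toLeft.card := by
    rcases hx : s tr with x | x
    · exact Finset.card_pos.2 ⟨x, by simp [SS, ← hx]⟩
    · simp [hx] at htr
  have hr : 0 < SS.toRight.card := by
    rcases hx : s tl with x | x
    · simp [hx] at htl
    · exact Finset.card_pos.2 ⟨x, by simp [SS, ← hx]⟩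
  have c1 : p ≤ SS.toLeftᶜ.card := by
    rw [Finset.card_compl, Fintype.card_fin]; omega
  have c2 : p ≤ SS.toRightᶜ.card := by
    rw [Finset.card_compl, Fintype.card_fin]; omega
  obtain ⟨X, hXi, hXm⟩ := exists_inj_fin c1
  obtain ⟨Y, hYi, hYm⟩ := exists_inj_fin c2
  have hX : ∀ i t, Sum.inl (X i) ≠ s t := by
    intro i t hh
    refine Finset.mem_compl.1 (hXm i) (Finset.mem_toLeft.2 ?_)
    exact Finset.mem_image.2 ⟨t, Finset.mem_univ _, hh.symm⟩
  have hY : ∀ i t, Sum.inr (Y i) ≠ s t := by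
    intro i t hh
    refine Finset.mem_compl.1 (hYm i) (Finset.mem_toRight.2 ?_)
    exact Finset.mem_image.2 ⟨t, Finset.mem_univ _, hh.symm⟩
  refine ⟨Fin p, inferInstance,
    fun i t => if (s t).isLeft then Sum.inr (Y i) else Sum.inl (X i), by simp, ?_, ?_⟩
  · intro i
    refine ⟨fun t => ?_, fun t u => ?_, fun t u => ?_⟩
    · rcases hx : s t with x | x <;> simp [hx]
    · beta_reduce; split_ifs
      · exact hY i u
      · exact hX i u
    · beta_reduce; split_ifs <;> simp
  · intro i j hij t u
    have h1 := hXi.ne hij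
    have h2 := hYi.ne hij
    beta_reduce; split_ifs <;> simp [h1, h2]

theorem tau_bip (p c : ℕ) (hb : p ≤ c) :
    tau (completeBipartiteGraph (Fin (p + 2)) (Fin (c + 2))) 3 = p := by
  classical
  refine tau_eq (bip_low p (c + 2) (by omega)) {Sum.inr 0, Sum.inl 0, Sum.inl 1} ?_
    (Sum.inr 0) ?_ (((Finset.univ : Finset (Fin (p + 2))) \ {0, 1}).image Sum.inl) ?_ ?_
  · rw [Finset.card_eq_three]
    exact ⟨_, _, _, by simp, by simp, by simp, rfl⟩
  · simp
  · rw [Finset.card_image_of_injective _ Sum.inl_injective, Finset.card_univ_sdiff]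
    simp
  · rintro (w | w) h1 h2
    · simpa using h2
    · simp at h1

theorem box_extra {α β : Type} [DecidableEq α] [DecidableEq β] (r : Fin 3 → α) (c : Fin 3 → β)
    (hs : Function.Injective fun t => (r t, c t)) :
    ∃ (e : ℕ) (K : Fin e → Fin 3 → α × β),
      (Finset.univ.image r).card + (Finset.univ.image c).card ≤ 4 + e ∧
      (∀ i, HubSys ((⊤ : SimpleGraph α) □ (⊤ : SimpleGraph β)) (fun t => (r t, c t)) (K i)) ∧
      (∀ i j, i ≠ j → ∀ t u, K i t ≠ K j u) ∧
      ∀ i t, (∃ u, (K i t).1 = r u) ∧ ∃ u, (K i t).2 = c u := by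
  have card3 : ∀ {γ : Type} [DecidableEq γ] (f : Fin 3 → γ), (Finset.univ.image f).card ≤ 3 :=
    fun f => Finset.card_image_le.trans (by simp)
  have card2 : ∀ {γ : Type} [DecidableEq γ] (f : Fin 3 → γ), ¬ Function.Injective f →
      (Finset.univ.image f).card ≤ 2 := by
    intro γ _ f hf
    have h3 := card3 f
    by_contra hcon
    apply hf
    have h4 : (Finset.univ.image f).card = (Finset.univ : Finset (Fin 3)).card := by
      simp only [Finset.card_univ, Fintype.card_fin]; omega
    have h5 := Finset.card_image_iff.1 h4
    intro x y hxy
    exact h5 (by simp) (by simp) hxy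
  have card1 : ∀ {γ : Type} [DecidableEq γ] (f : Fin 3 → γ), (∀ t, f t = f 0) →
      (Finset.univ.image f).card ≤ 1 := by
    intro γ _ f hf
    rw [Finset.card_le_one]
    intro a ha b hb
    simp at ha hb
    obtain ⟨t, rfl⟩ := ha
    obtain ⟨u, rfl⟩ := hb
    rw [hf t, hf u]
  have three : ∀ {γ : Type} (f : Fin 3 → γ), ¬ Function.Injective f → (∀ t, f t = f 0) ∨
      ∃ u w, f u ≠ f w ∧ ∀ t, t ≠ w → f t = f u := by
    intro γ f hf
    by_cases h01 : f 0 = f 1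
    · by_cases h02 : f 0 = f 2
      · left; intro t; fin_cases t <;> simp [← h01, ← h02]
      · right; refine ⟨0, 2, h02, fun t ht => ?_⟩; fin_cases t <;> simp_all
    · by_cases h02 : f 0 = f 2
      · right; refine ⟨0, 1, h01, fun t ht => ?_⟩; fin_cases t <;> simp_all
      · by_cases h12 : f 1 = f 2
        · right; refine ⟨1, 0, Ne.symm h01, fun t ht => ?_⟩; fin_cases t <;> simp_all
        · exfalso; apply hf; intro t u htu
          fin_cases t <;> fin_cases u <;> simp_all
  have triv : (Finset.univ.image r).card + (Finset.univ.image c).card ≤ 4 →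
    ∃ (e : ℕ) (K : Fin e → Fin 3 → α × β),
      (Finset.univ.image r).card + (Finset.univ.image c).card ≤ 4 + e ∧
      (∀ i, HubSys ((⊤ : SimpleGraph α) □ (⊤ : SimpleGraph β)) (fun t => (r t, c t)) (K i)) ∧
      (∀ i j, i ≠ j → ∀ t u, K i t ≠ K j u) ∧
      ∀ i t, (∃ u, (K i t).1 = r u) ∧ ∃ u, (K i t).2 = c u :=
    fun h => ⟨0, fun i => i.elim0, h, fun i => i.elim0, fun i => i.elim0, fun i => i.elim0⟩
  have r3 := card3 r
  have c3 := card3 c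
  by_cases hr : Function.Injective r
  · by_cases hc : Function.Injective c
    · refine ⟨2, ![![(r 0, c 1), (r 0, c 1), (r 2, c 1)], ![(r 1, c 0), (r 1, c 0), (r 1, c 2)]],
        by omega, ?_, ?_, ?_⟩
      · intro i
        refine ⟨fun t => ?_, fun t u => ?_, fun t u => ?_⟩
        · fin_cases i <;> fin_cases t <;> simp [boxProd_adj, hr.eq_iff, hc.eq_iff]
        · fin_cases i <;> fin_cases t <;> fin_cases u <;> simp [hr.eq_iff, hc.eq_iff]
        · fin_cases i <;> fin_cases t <;> fin_cases u <;>
            simp [boxProd_adj, hr.eq_iff, hc.eq_iff]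
      · intro i j hij t u
        fin_cases i <;> fin_cases j <;> fin_cases t <;> fin_cases u <;>
          simp [hr.eq_iff, hc.eq_iff] at hij ⊢
      · intro i t
        fin_cases i <;> fin_cases t <;> exact ⟨⟨_, rfl⟩, ⟨_, rfl⟩⟩
    · have hc2 := card2 c hc
      rcases three c hc with h1 | ⟨u, w, huw, hall⟩
      · have := card1 c h1
        exact triv (by omega)
      · refine ⟨1, fun _ _ => (r w, c u), by omega, ?_, ?_, ?_⟩
        · intro i
          refine ⟨fun t => ?_, fun t v => ?_, fun t v => Or.inl rfl⟩
          · by_cases ht : t = w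
            · subst ht; simp [boxProd_adj, huw.symm]
            · simp [boxProd_adj, hall t ht, hr.eq_iff, ht]
          · intro hh
            simp only [Prod.mk.injEq] at hh
            have := hr hh.1
            subst this
            exact huw hh.2
        · intro i j hij; exact absurd (Subsingleton.elim i j) hij
        · intro i t; exact ⟨⟨_, rfl⟩, ⟨_, rfl⟩⟩
  · have hr2 := card2 r hr
    by_cases hc : Function.Injective c
    · rcases three r hr with h1 | ⟨u, w, huw, hall⟩
      · have := card1 r h1
        exact triv (by omega)
      · refine ⟨1, fun _ _ => (r u, c w), by omega, ?_, ?_, ?_⟩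
        · intro i
          refine ⟨fun t => ?_, fun t v => ?_, fun t v => Or.inl rfl⟩
          · by_cases ht : t = w
            · subst ht; simp [boxProd_adj, huw.symm]
            · simp [boxProd_adj, hall t ht, hc.eq_iff, ht]
          · intro hh
            simp only [Prod.mk.injEq] at hh
            have := hc hh.2
            subst this
            exact huw hh.1
        · intro i j hij; exact absurd (Subsingleton.elim i j) hij
        · intro i t; exact ⟨⟨_, rfl⟩, ⟨_, rfl⟩⟩
    · have hc2 := card2 c hc
      exact triv (by omega)

theorem box_low {α β : Type} [Fintype α] [Fintype β]
    (s : Fin 3 → α × β) (hs : Function.Injective s) : ∃ (ι : Type) (_ : Fintype ι)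
      (k : ι → Fin 3 → α × β), Fintype.card α + Fintype.card β - 4 ≤ Fintype.card ι ∧
        (∀ i, HubSys ((⊤ : SimpleGraph α) □ (⊤ : SimpleGraph β)) s (k i)) ∧
        ∀ i j, i ≠ j → ∀ t u, k i t ≠ k j u := by
  classical
  obtain ⟨r, hr⟩ : ∃ r, r = fun t => (s t).1 := ⟨_, rfl⟩
  obtain ⟨c, hc⟩ : ∃ c, c = fun t => (s t).2 := ⟨_, rfl⟩
  have hsrc : s = fun t => (r t, c t) := by subst hr hc; rfl
  clear hr hc
  subst hsrc
  obtain ⟨e, K, hcard, hK, hKd, hKm⟩ := box_extra r c hs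
  let R := Finset.univ.image r
  let C := Finset.univ.image c
  have hR : ∀ i : {i // i ∈ Rᶜ}, ∀ t, i.1 ≠ r t := by
    intro i t hh
    exact Finset.mem_compl.1 i.2 (Finset.mem_image.2 ⟨t, Finset.mem_univ _, hh.symm⟩)
  have hC : ∀ i : {i // i ∈ Cᶜ}, ∀ t, i.1 ≠ c t := by
    intro i t hh
    exact Finset.mem_compl.1 i.2 (Finset.mem_image.2 ⟨t, Finset.mem_univ _, hh.symm⟩)
  refine ⟨({i // i ∈ Rᶜ} ⊕ {j // j ∈ Cᶜ}) ⊕ Fin e, inferInstance,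
    Sum.elim (Sum.elim (fun i t => (i.1, c t)) (fun j t => (r t, j.1))) K, ?_, ?_, ?_⟩
  · have h1 : R.card ≤ Fintype.card α := Finset.card_le_univ R
    have h2 : C.card ≤ Fintype.card β := Finset.card_le_univ C
    have h3 : R.card + C.card ≤ 4 + e := hcard
    rw [Fintype.card_sum, Fintype.card_sum, Fintype.card_coe, Fintype.card_coe, Fintype.card_fin,
      Finset.card_compl, Finset.card_compl]
    omega
  · rintro ((i | j) | i)
    · refine ⟨fun t => ?_, fun t u => ?_, fun t u => ?_⟩
      · simp [boxProd_adj, (hR i t).symm]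
      · simp [hR i u]
      · simp [boxProd_adj]; tauto
    · refine ⟨fun t => ?_, fun t u => ?_, fun t u => ?_⟩
      · simp [boxProd_adj, (hC j t).symm]
      · simp [hC j u]
      · simp [boxProd_adj]; tauto
    · exact hK i
  · rintro ((i | i) | i) ((j | j) | j) hij t u hh
    · simp only [Sum.elim_inl, Prod.mk.injEq] at hh
      exact hij (by rw [Subtype.ext hh.1])
    · simp only [Sum.elim_inl, Sum.elim_inr, Prod.mk.injEq] at hh
      exact hR i _ hh.1
    · obtain ⟨⟨v, hv⟩, _⟩ := hKm j u
      simp only [Sum.elim_inl, Sum.elim_inr] at hh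
      rw [← hh] at hv
      exact hR i _ hv
    · simp only [Sum.elim_inl, Sum.elim_inr, Prod.mk.injEq] at hh
      exact hR j _ hh.1.symm
    · simp only [Sum.elim_inl, Sum.elim_inr, Prod.mk.injEq] at hh
      exact hij (by rw [Subtype.ext hh.2])
    · obtain ⟨_, ⟨v, hv⟩⟩ := hKm j u
      simp only [Sum.elim_inl, Sum.elim_inr] at hh
      rw [← hh] at hv
      exact hC i _ hv
    · obtain ⟨⟨v, hv⟩, _⟩ := hKm i t
      simp only [Sum.elim_inl, Sum.elim_inr] at hh
      rw [hh] at hv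
      exact hR j _ hv
    · obtain ⟨_, ⟨v, hv⟩⟩ := hKm i t
      simp only [Sum.elim_inl, Sum.elim_inr] at hh
      rw [hh] at hv
      exact hC j _ hv
    · exact hKd i j (fun e => hij (by rw [e])) t u hh

theorem tau_box {W : Type} {G : SimpleGraph W} (a b : ℕ)
    (e : G ≃g (⊤ : SimpleGraph (Fin (a + 2))) □ (⊤ : SimpleGraph (Fin (b + 2)))) :
    tau G 3 = a + b := by
  classical
  have : Finite W := Finite.of_equiv _ e.symm.toEquiv
  let N : Finset (Fin (a + 2) × Fin (b + 2)) :=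
    (Finset.univ \ {0, 1}).image (fun i => (i, 0)) ∪ (Finset.univ \ {0, 1}).image (fun j => (0, j))
  apply tau_eq (S := ({(0, 0), (0, 1), (1, 0)} : Finset _).map e.symm.toEquiv.toEmbedding)
    (v := e.symm (0, 0)) (N := N.map e.symm.toEquiv.toEmbedding)
  · intro s hs
    obtain ⟨ι, hι, k, h1, h2, h3⟩ := box_low (fun t => e (s t)) (e.injective.comp hs)
    refine ⟨ι, hι, fun i t => e.symm (k i t), ?_, ?_, ?_⟩
    · simp only [Fintype.card_fin] at h1; omega
    · intro i
      refine ⟨fun t => ?_, fun t u => ?_, fun t u => ?_⟩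
      · rw [← e.map_adj_iff]; simpa using (h2 i).adj t
      · intro hh
        apply (h2 i).notin t u
        rw [← hh]; simp
      · rcases (h2 i).near t u with h | h
        · left; exact congrArg e.symm h
        · right; rw [← e.map_adj_iff]; simpa using h
    · intro i j hij t u hh
      exact h3 i j hij t u (e.symm.injective hh)
  · rw [Finset.card_map, Finset.card_eq_three]
    exact ⟨_, _, _, by simp, by simp, by simp, rfl⟩
  · exact Finset.mem_map.2 ⟨(0, 0), by simp, rfl⟩
  · rw [Finset.card_map]
    refine (Finset.card_union_le _ _).trans ?_
    refine (add_le_add Finset.card_image_le Finset.card_image_le).trans ?_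
    rw [Finset.card_univ_sdiff, Finset.card_univ_sdiff]
    simp
  · intro w h1 h2
    obtain ⟨⟨i, j⟩, rfl⟩ := e.symm.surjective w
    rw [e.symm.map_adj_iff] at h1
    have h2' : (i, j) ∉ ({(0, 0), (0, 1), (1, 0)} : Finset (Fin (a + 2) × Fin (b + 2))) :=
      fun hh => h2 (Finset.mem_map.2 ⟨_, hh, rfl⟩)
    refine Finset.mem_map.2 ⟨(i, j), ?_, rfl⟩
    simp only [boxProd_adj, top_adj] at h1
    simp only [Finset.mem_insert, Finset.mem_singleton, Prod.mk.injEq, not_or, not_and] at h2'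
    simp only [N, Finset.mem_union, Finset.mem_image, Finset.mem_sdiff, Finset.mem_univ,
      Finset.mem_insert, Finset.mem_singleton, true_and, not_or, Prod.mk.injEq]
    rcases h1 with ⟨h3, rfl⟩ | ⟨h3, rfl⟩
    · exact Or.inl ⟨i, ⟨Ne.symm h3, fun h => h2'.2.2 h rfl⟩, rfl, rfl⟩
    · exact Or.inr ⟨j, ⟨Ne.symm h3, h2'.2.1 rfl⟩, rfl, rfl⟩

theorem lineGraph_bip_iso (α β : Type) :
    Nonempty ((completeBipartiteGraph α β).lineGraph ≃g
      (⊤ : SimpleGraph α) □ (⊤ : SimpleGraph β)) := by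
  let f : α × β → (completeBipartiteGraph α β).edgeSet :=
    fun x => ⟨s(Sum.inl x.1, Sum.inr x.2), by simp⟩
  have hf : Function.Bijective f := by
    constructor
    · rintro ⟨i, j⟩ ⟨i', j'⟩ hh
      simpa [f] using hh
    · rintro ⟨z, hz⟩
      induction z using Sym2.ind with
      | _ x y =>
        rcases x with x | x <;> rcases y with y | y
        · simp at hz
        · exact ⟨(x, y), rfl⟩
        · exact ⟨(y, x), Subtype.ext Sym2.eq_swap⟩
        · simp at hz
  refine ⟨RelIso.symm ⟨Equiv.ofBijective f hf, ?_⟩⟩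
  rintro ⟨i, j⟩ ⟨i', j'⟩
  rw [lineGraph_adj_iff_exists]
  simp only [Equiv.ofBijective_apply, hf.injective.ne_iff, boxProd_adj, top_adj, f]
  simp only [Sym2.mem_iff, Prod.mk.injEq, ne_eq]
  constructor
  · rintro ⟨hne, v, rfl | rfl, h | h⟩ <;> simp at h <;> subst h <;> simp at hne ⊢ <;> exact hne
  · rintro (⟨h1, rfl⟩ | ⟨h1, rfl⟩)
    · exact ⟨by simp [h1], Sum.inr j, by simp, by simp⟩
    · exact ⟨by simp [h1], Sum.inl i, by simp, by simp⟩

/-- For q ≥ 2p there is a graph G with τ_3(G) = p and τ_3(L(G)) = q;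
in particular G = K_{p+2, q-p+2} works. -/
theorem exists_graph_tau_three (p q : ℕ) (h : 2 * p ≤ q) :
    (∃ (V : Type) (_ : Fintype V) (G : SimpleGraph V),
        tau G 3 = p ∧ tau G.lineGraph 3 = q) ∧
    tau (completeBipartiteGraph (Fin (p + 2)) (Fin (q - p + 2))) 3 = p ∧
    tau (SimpleGraph.boxProd (⊤ : SimpleGraph (Fin (p + 2)))
        (⊤ : SimpleGraph (Fin (q - p + 2)))) 3 = q := by

  have hb := tau_bip p (q - p) (by omega)
  obtain ⟨e⟩ := lineGraph_bip_iso (Fin (p + 2)) (Fin (q - p + 2))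
  have hq : p + (q - p) = q := by omega
  have hl := tau_box p (q - p) e
  have hx := tau_box p (q - p) (SimpleGraph.Iso.refl (G := 
    (⊤ : SimpleGraph (Fin (p + 2))) □ (⊤ : SimpleGraph (Fin (q - p + 2)))))
  rw [hq] at hl hx
  exact ⟨⟨_, inferInstance, _, hb, hl⟩, hb, hx⟩
end
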